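/- arXiv:2406.07735 — 4 statements merged into one kernel-verified Lean document; each statement's English description precedes it below -/
import Mathlib

section
/- Let W be a finite type, and let p : W → ℝ be a probability distribution (p(w) ≥ 0 for all w and Σ_{w∈W} p(w) = 1). Let S ⊆ W be a nonempty subset such that p(w) > 0 for every w ∈ S and p(w) ≥ p(w') for every w ∈ S and w' ∉ S (S consists of the top-probability tokens). Let g = Σ_{w∈S} p(w), and define the renormalized (ideal) distribution p* : W → ℝ by p*(w) = p(w)/g for w ∈ S and p*(w) = 0 otherwise. Then the entropy gap satisfies H(p) − H(p*) ≥ −log g, where H(q) = −Σ_{w∈W} q(w) log q(w) with the convention 0 · log 0 = 0. -/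
/-- Entropy (natural log), with the convention `0 * log 0 = 0`
(which holds automatically since `Real.log 0 = 0`). -/
noncomputable def entropy {W : Type*} [Fintype W] (q : W → ℝ) : ℝ :=
  -∑ w, q w * Real.log (q w)

/-- Core inequality of Theorem 1 (REAL sampling): the entropy gap between the
full distribution `p` and the renormalized top-token distribution `p*` is at
least `-log g`, where `g` is the total probability of the top-token set `S`. -/
theorem entropy_gap_ge_neg_log
    {W : Type*} [Fintype W] [DecidableEq W] (p : W → ℝ)
    (hp : ∀ w, 0 ≤ p w) (hsum : ∑ w, p w = 1)
    (S : Finset W) (hS : S.Nonempty)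
    (hpos : ∀ w ∈ S, 0 < p w)
    (htop : ∀ w ∈ S, ∀ w' ∉ S, p w' ≤ p w)
    (g : ℝ) (hg : g = ∑ w ∈ S, p w)
    (pStar : W → ℝ) (hpStar : ∀ w, pStar w = if w ∈ S then p w / g else 0) :
    entropy p - entropy pStar ≥ -Real.log g := by
  have hgpos : 0 < g := by rw [hg]; exact Finset.sum_pos hpos hS
  obtain ⟨m, hmS, hm⟩ := Finset.exists_min_image S p hS
  have hsplit : ∀ f : W → ℝ, ∑ w, f w = ∑ w ∈ S, f w + ∑ w ∈ Sᶜ, f w :=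
    fun f => (Finset.sum_add_sum_compl S f).symm
  have hc : ∑ w ∈ Sᶜ, p w = 1 - g := by
    have := hsplit p
    linarith
  have hc0 : 0 ≤ 1 - g := by
    rw [← hc]; exact Finset.sum_nonneg (fun w _ => hp w)
  have hA : g * Real.log (p m) ≤ ∑ w ∈ S, p w * Real.log (p w) := by
    rw [hg, Finset.sum_mul]
    exact Finset.sum_le_sum fun w hw =>
      mul_le_mul_of_nonneg_left (Real.log_le_log (hpos m hmS) (hm w hw)) (hp w)
  have hB : ∑ w ∈ Sᶜ, p w * Real.log (p w) ≤ (1 - g) * Real.log (p m) := by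
    rw [← hc, Finset.sum_mul]
    refine Finset.sum_le_sum fun w hw => ?_
    rcases (hp w).eq_or_lt with h | h
    · simp [← h]
    · exact mul_le_mul_of_nonneg_left
        (Real.log_le_log h (htop m hmS w (Finset.mem_compl.mp hw))) (hp w)
  have hstar : ∑ w, pStar w * Real.log (pStar w)
      = (∑ w ∈ S, p w * Real.log (p w)) / g - Real.log g := by
    rw [hsplit]
    have h0 : ∑ w ∈ Sᶜ, pStar w * Real.log (pStar w) = 0 :=
      Finset.sum_eq_zero fun w hw => by
        rw [hpStar, if_neg (Finset.mem_compl.mp hw), zero_mul]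
    have h1 : ∑ w ∈ S, pStar w * Real.log (pStar w)
        = ∑ w ∈ S, (p w * Real.log (p w) / g - p w * (Real.log g / g)) :=
      Finset.sum_congr rfl fun w hw => by
        rw [hpStar, if_pos hw, Real.log_div (hpos w hw).ne' hgpos.ne']
        ring
    rw [h0, h1, Finset.sum_sub_distrib, ← Finset.sum_div, ← Finset.sum_mul, ← hg,
      mul_div_cancel₀ _ hgpos.ne', add_zero]
  unfold entropy
  rw [hstar, hsplit]
  set A := ∑ w ∈ S, p w * Real.log (p w)
  have hA' : Real.log (p m) ≤ A / g := by
    rw [le_div_iff₀ hgpos]; linarith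
  have hAg : A = g * (A / g) := by field_simp
  have := mul_le_mul_of_nonneg_left hA' hc0
  linarith
end

section
/- Let W be a finite type, p : W → ℝ a probability distribution (p(w) ≥ 0, Σ_{w∈W} p(w) = 1), and S ⊆ W a nonempty subset with p(w) > 0 for every w ∈ S and p(w) ≥ p(w') for every w ∈ S, w' ∉ S. Let g = Σ_{w∈S} p(w), let p*(w) = p(w)/g for w ∈ S and p*(w) = 0 otherwise, and let d = H(p) − H(p*). Then for every real temperature T > 0, exp(−d/T) ≤ g^{1/T}. -/
/-- Theorem 1 of the paper: if the residual entropy `d = H(p) - H(p*)` is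
computed exactly from the ideal top-token threshold `g`, then the REAL-sampling
threshold `exp(-d/T)` is at most `g^(1/T)` for every temperature `T > 0`. -/
theorem real_sampling_threshold_le
    {W : Type*} [Fintype W] [DecidableEq W] (p : W → ℝ)
    (hp : ∀ w, 0 ≤ p w) (hsum : ∑ w, p w = 1)
    (S : Finset W) (hS : S.Nonempty)
    (hpos : ∀ w ∈ S, 0 < p w)
    (htop : ∀ w ∈ S, ∀ w' ∉ S, p w' ≤ p w)
    (g : ℝ) (hg : g = ∑ w ∈ S, p w)
    (pStar : W → ℝ) (hpStar : ∀ w, pStar w = if w ∈ S then p w / g else 0)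
    (d : ℝ) (hd : d = entropy p - entropy pStar)
    (T : ℝ) (hT : 0 < T) :
    Real.exp (-d / T) ≤ g ^ (1 / T) := by
  obtain ⟨m, hmS, hm⟩ := S.exists_min_image p hS
  have hg0 : 0 < g := hg ▸ Finset.sum_pos hpos hS
  have hsplit : ∑ w ∈ S, p w + ∑ w ∈ Sᶜ, p w = 1 := by
    rw [Finset.sum_add_sum_compl, hsum]
  have hc0 : 0 ≤ ∑ w ∈ Sᶜ, p w := Finset.sum_nonneg fun w _ => hp w
  have hc : ∑ w ∈ Sᶜ, p w = 1 - g := by linarith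
  have hg1 : 0 ≤ 1 - g := by linarith
  have ha : g * Real.log (p m) ≤ ∑ w ∈ S, p w * Real.log (p w) := by
    rw [hg, Finset.sum_mul]
    exact Finset.sum_le_sum fun w hw =>
      mul_le_mul_of_nonneg_left (Real.log_le_log (hpos m hmS) (hm w hw)) (hp w)
  have hb : ∑ w ∈ Sᶜ, p w * Real.log (p w) ≤ (1 - g) * Real.log (p m) := by
    rw [← hc, Finset.sum_mul]
    refine Finset.sum_le_sum fun w hw => ?_
    rcases (hp w).eq_or_lt with h | h
    · simp [← h]
    · exact mul_le_mul_of_nonneg_left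
        (Real.log_le_log h (htop m hmS w (Finset.mem_compl.mp hw))) h.le
  have hH : entropy p = -(∑ w ∈ S, p w * Real.log (p w) + ∑ w ∈ Sᶜ, p w * Real.log (p w)) := by
    rw [Finset.sum_add_sum_compl, entropy]
  have hHs : entropy pStar = -((∑ w ∈ S, p w * Real.log (p w)) / g - Real.log g) := by
    rw [entropy, ← Finset.sum_add_sum_compl S]
    have h2 : ∑ w ∈ Sᶜ, pStar w * Real.log (pStar w) = 0 :=
      Finset.sum_eq_zero fun w hw => by
        rw [hpStar, if_neg (Finset.mem_compl.mp hw), zero_mul]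
    have h1 : ∑ w ∈ S, pStar w * Real.log (pStar w)
        = ∑ w ∈ S, (p w * Real.log (p w) / g - p w * (Real.log g / g)) :=
      Finset.sum_congr rfl fun w hw => by
        rw [hpStar, if_pos hw, Real.log_div (hpos w hw).ne' hg0.ne']
        ring
    rw [h1, h2, Finset.sum_sub_distrib, ← Finset.sum_div, ← Finset.sum_mul, ← hg]
    field_simp
    ring
  have key : -d ≤ Real.log g := by
    rw [hd, hH, hHs]
    generalize ∑ w ∈ S, p w * Real.log (p w) = a at *
    generalize ∑ w ∈ Sᶜ, p w * Real.log (p w) = b at *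
    have h1 : Real.log (p m) ≤ a / g := by
      rw [le_div_iff₀ hg0]; linarith
    have h2 := mul_le_mul_of_nonneg_left h1 hg1
    have h3 : (1 - g) * (a / g) = a / g - a := by
      field_simp
    linarith
  rw [Real.rpow_def_of_pos hg0, mul_one_div]
  exact Real.exp_le_exp.mpr (div_le_div_of_nonneg_right key hT.le)
end

section
/- Let W be a finite type, p : W → ℝ a probability distribution (p(w) ≥ 0, Σ_{w∈W} p(w) = 1), and S ⊆ W a nonempty subset with p(w) > 0 for every w ∈ S and p(w) ≥ p(w') for every w ∈ S, w' ∉ S. Let g = Σ_{w∈S} p(w), A = Σ_{w∈S} p(w) log(1/p(w)), and B = Σ_{w∉S} p(w) log(1/p(w)) (with 0 · log(1/0) = 0). Then B ≥ ((1 − g)/g) · A. -/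
/-- Key intermediate inequality for Theorem 1: with `S` the top-token set of
total mass `g`, the tail partial-entropy sum `B` dominates `((1-g)/g)` times
the head partial-entropy sum `A`.  The convention `0 * log (1/0) = 0` holds
automatically since `Real.log (1/0) = Real.log 0 = 0`. -/
theorem tail_entropy_dominates
    {W : Type*} [Fintype W] [DecidableEq W] (p : W → ℝ)
    (hp : ∀ w, 0 ≤ p w) (hsum : ∑ w, p w = 1)
    (S : Finset W) (hS : S.Nonempty)
    (hpos : ∀ w ∈ S, 0 < p w)
    (htop : ∀ w ∈ S, ∀ w' ∉ S, p w' ≤ p w)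
    (g : ℝ) (hg : g = ∑ w ∈ S, p w)
    (A : ℝ) (hA : A = ∑ w ∈ S, p w * Real.log (1 / p w))
    (B : ℝ) (hB : B = ∑ w ∈ Sᶜ, p w * Real.log (1 / p w)) :
    B ≥ ((1 - g) / g) * A := by
  obtain ⟨m, hmS, hm⟩ := S.exists_min_image p hS
  have hm0 := hpos m hmS
  have hg0 : 0 < g := by
    rw [hg]; exact Finset.sum_pos hpos hS
  have hc : ∑ w ∈ Sᶜ, p w = 1 - g := by
    have := Finset.sum_add_sum_compl S p
    linarith
  have hg1 : 0 ≤ 1 - g := by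
    rw [← hc]; exact Finset.sum_nonneg (fun w _ => hp w)
  have h1 : A ≤ g * Real.log (1 / p m) := by
    rw [hA, hg, Finset.sum_mul]
    refine Finset.sum_le_sum (fun w hw => mul_le_mul_of_nonneg_left ?_ (hp w))
    exact Real.log_le_log (one_div_pos.mpr (hpos w hw))
      (one_div_le_one_div_of_le hm0 (hm w hw))
  have h2 : (1 - g) * Real.log (1 / p m) ≤ B := by
    rw [hB, ← hc, Finset.sum_mul]
    refine Finset.sum_le_sum (fun w hw => ?_)
    rcases (hp w).eq_or_lt with h | h
    · simp [← h]
    · refine mul_le_mul_of_nonneg_left ?_ (hp w)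
      exact Real.log_le_log (one_div_pos.mpr hm0)
        (one_div_le_one_div_of_le h (htop m hmS w (Finset.mem_compl.mp hw)))
  calc (1 - g) / g * A ≤ (1 - g) / g * (g * Real.log (1 / p m)) :=
        mul_le_mul_of_nonneg_left h1 (div_nonneg hg1 hg0.le)
    _ = (1 - g) * Real.log (1 / p m) := by field_simp
    _ ≤ B := h2
end

section
/- Let W be a finite type, p : W → ℝ a probability distribution (p(w) ≥ 0, Σ_{w∈W} p(w) = 1), and S ⊆ W a nonempty subset with p(w) > 0 for every w ∈ S and p(w) ≥ p(w') for every w ∈ S, w' ∉ S. Let g = Σ_{w∈S} p(w), and define p*(w) = p(w)/g for w ∈ S and p*(w) = 0 otherwise. Then H(p) ≥ H(p*), i.e., the residual entropy d = H(p) − H(p*) is nonnegative, where H(q) = −Σ_{w∈W} q(w) log q(w) with 0 · log 0 = 0. -/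
/-- Corollary of Theorem 1: the residual entropy `H(p) - H(p*)` is
nonnegative, i.e. `H(p) ≥ H(p*)`. -/
theorem entropy_ge_entropy_renormalized
    {W : Type*} [Fintype W] [DecidableEq W] (p : W → ℝ)
    (hp : ∀ w, 0 ≤ p w) (hsum : ∑ w, p w = 1)
    (S : Finset W) (hS : S.Nonempty)
    (hpos : ∀ w ∈ S, 0 < p w)
    (htop : ∀ w ∈ S, ∀ w' ∉ S, p w' ≤ p w)
    (g : ℝ) (hg : g = ∑ w ∈ S, p w)
    (pStar : W → ℝ) (hpStar : ∀ w, pStar w = if w ∈ S then p w / g else 0) :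
    entropy p ≥ entropy pStar := by
  obtain ⟨m, hmS, hm⟩ := S.exists_min_image p hS
  have hmpos := hpos m hmS
  have hgpos : 0 < g := hg ▸ Finset.sum_pos hpos hS
  have hsplit : ∑ w ∈ S, p w + ∑ w ∈ Sᶜ, p w = 1 := by
    rw [Finset.sum_add_sum_compl, hsum]
  have hcnn : 0 ≤ ∑ w ∈ Sᶜ, p w := Finset.sum_nonneg fun w _ => hp w
  have hg1 : g ≤ 1 := by linarith
  have hA : g * Real.log (p m) ≤ ∑ w ∈ S, p w * Real.log (p w) := by
    rw [hg, Finset.sum_mul]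
    refine Finset.sum_le_sum fun w hw => ?_
    exact mul_le_mul_of_nonneg_left (Real.log_le_log hmpos (hm w hw)) (hp w)
  have hB : ∑ w ∈ Sᶜ, p w * Real.log (p w) ≤ (1 - g) * Real.log (p m) := by
    have h1 : 1 - g = ∑ w ∈ Sᶜ, p w := by linarith
    rw [h1, Finset.sum_mul]
    refine Finset.sum_le_sum fun w hw => ?_
    rcases (hp w).eq_or_lt with h | h
    · simp [← h]
    · exact mul_le_mul_of_nonneg_left
        (Real.log_le_log h (htop m hmS w (Finset.mem_compl.mp hw))) (hp w)
  have hP : ∑ w, p w * Real.log (p w)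
      = ∑ w ∈ S, p w * Real.log (p w) + ∑ w ∈ Sᶜ, p w * Real.log (p w) :=
    (Finset.sum_add_sum_compl S _).symm
  have hQ : ∑ w, pStar w * Real.log (pStar w)
      = (∑ w ∈ S, p w * Real.log (p w)) / g - Real.log g := by
    have h0 : ∑ w ∈ Sᶜ, pStar w * Real.log (pStar w) = 0 := by
      refine Finset.sum_eq_zero fun w hw => ?_
      simp [hpStar, Finset.mem_compl.mp hw]
    have h1 : ∑ w ∈ S, pStar w * Real.log (pStar w)
        = ∑ w ∈ S, (p w * Real.log (p w) / g - p w * (Real.log g / g)) := by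
      refine Finset.sum_congr rfl fun w hw => ?_
      rw [hpStar, if_pos hw, Real.log_div (hpos w hw).ne' hgpos.ne']
      ring
    rw [← Finset.sum_add_sum_compl S, h0, h1, Finset.sum_sub_distrib, ← Finset.sum_div,
      ← Finset.sum_mul, ← hg, mul_div_cancel₀ _ hgpos.ne', add_zero]
  have hlog : Real.log g ≤ 0 := Real.log_nonpos hgpos.le hg1
  unfold entropy
  rw [hP, hQ]
  generalize (∑ w ∈ S, p w * Real.log (p w)) = A at *
  have hd : Real.log (p m) ≤ A / g := by
    rw [le_div_iff₀ hgpos]; linarith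
  have hAe : A = g * (A / g) := by field_simp
  have := mul_le_mul_of_nonneg_left hd (sub_nonneg.mpr hg1)
  linarith
end
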